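/- arXiv:1803.01388 — 2 statements merged into one kernel-verified Lean document; each statement's English description precedes it below -/
import Mathlib

section
/- Let K be a field of characteristic zero and let I ⊂ S = K[x_1,…,x_n] be an artinian monomial ideal generated in a single degree d. Suppose there exist integers 1 ≤ i < j ≤ n and a, b ≥ 0 such that every monomial of degree d not contained in I is divisible by x_i^a·x_j^b. Then the multiplication map ×(x_i+x_j)^{a+b} : (S/I)_{k−a−b} → (S/I)_k has maximal rank for every integer k. -/
open MvPolynomial

/-- The degree-`j` graded component of `S/I` (for `S = K[x_1,…,x_n]`), as a `K`-submodule of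
the quotient: the image of the space of homogeneous polynomials of degree `j`.
For negative `j` it is the zero submodule. -/
noncomputable def gradedPiece {K : Type*} [Field K] {n : ℕ}
    (I : Ideal (MvPolynomial (Fin n) K)) (j : ℤ) :
    Submodule K (MvPolynomial (Fin n) K ⧸ I) :=
  if 0 ≤ j then
    (homogeneousSubmodule (Fin n) K j.toNat).map (Ideal.Quotient.mkₐ K I).toLinearMap
  else ⊥

/-- A linear endomorphism `f` has maximal rank from `A` to `B` if it is injective on `A`
or maps `A` onto `B`. -/
def MaxRankOn {K M : Type*} [Field K] [AddCommGroup M] [Module K M]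
    (f : M →ₗ[K] M) (A B : Submodule K M) : Prop :=
  (∀ x ∈ A, f x = 0 → x = 0) ∨ B ≤ A.map f

/-!
A nonzero polynomial in one variable over a domain of characteristic zero with `m` terms vanishes
to order less than `m` at any `c ≠ 0`: the Euler-type operator `P ↦ X dP/dX - e P` removes the term
`X ^ e` and lowers the order of vanishing by at most one. A multiple `(X + 1) ^ (a + b) f` with
`deg f ≤ D` whose `D + 1` coefficients in degrees `a, …, a + D` all vanish has at most `a + b`
terms, so `f = 0`. By a dimension count those `D + 1` coefficients may then be prescribed freely.
Homogenizing, every monomial divisible by `x_i ^ a x_j ^ b` is congruent to a multiple of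
`(x_i + x_j) ^ (a + b)` modulo monomials of the same degree that are not divisible by
`x_i ^ a x_j ^ b`. In degrees `k ≥ d` the latter lie in `I`, so the multiplication map is
surjective; in degrees `k < d` it is injective because all terms of elements of `I` have degree at
least `d`.
-/

open scoped Polynomial

section SparsePolynomial

variable {R : Type*} [CommRing R]

lemma coeff_X_mul_derivative_sub_C_mul (P : R[X]) (e u : ℕ) :
    (Polynomial.X * P.derivative - Polynomial.C (e : R) * P).coeff u
      = ((u : R) - e) * P.coeff u := by
  cases u with
  | zero => simp
  | succ u =>
    simp only [Polynomial.coeff_sub, Polynomial.coeff_X_mul, Polynomial.coeff_derivative,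
      Polynomial.coeff_C_mul]
    push_cast
    ring

variable [IsDomain R] [CharZero R]

lemma support_X_mul_derivative_sub_C_mul (P : R[X]) (e : ℕ) :
    (Polynomial.X * P.derivative - Polynomial.C (e : R) * P).support = P.support.erase e := by
  ext u
  rw [Polynomial.mem_support_iff, coeff_X_mul_derivative_sub_C_mul]
  simp [sub_eq_zero]

theorem rootMultiplicity_lt_card_support {P : R[X]} (hP : P ≠ 0) {c : R} (hc : c ≠ 0) :
    P.rootMultiplicity c < P.support.card := by
  induction hN : P.support.card generalizing P with
  | zero => exact absurd (Polynomial.card_support_eq_zero.1 hN) hP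
  | succ N ih =>
    obtain ⟨e, he⟩ := Polynomial.nonempty_support_iff.2 hP
    set Q := Polynomial.X * P.derivative - Polynomial.C (e : R) * P with hQ_def
    have hQ_card : Q.support.card = N := by
      rw [hQ_def, support_X_mul_derivative_sub_C_mul, Finset.card_erase_of_mem he, hN,
        Nat.add_sub_cancel]
    by_cases hQ : Q = 0
    · have hP_card : P.support.card = 1 := by rw [hN, ← hQ_card, hQ]; simp
      obtain ⟨k, x, hx, rfl⟩ := Polynomial.card_support_eq_one.1 hP_card
      rw [Polynomial.rootMultiplicity_eq_zero (by simp [hx, hc])]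
      exact N.succ_pos
    · have hpow_dvd := P.pow_rootMultiplicity_dvd c
      have hQ_dvd : (Polynomial.X - Polynomial.C c) ^ (P.rootMultiplicity c - 1) ∣ Q :=
        dvd_sub
          (dvd_mul_of_dvd_right (Polynomial.pow_sub_one_dvd_derivative_of_pow_dvd hpow_dvd) _)
          (dvd_mul_of_dvd_right ((pow_dvd_pow _ (Nat.sub_le _ 1)).trans hpow_dvd) _)
      have := (Polynomial.le_rootMultiplicity_iff hQ).2 hQ_dvd
      have := ih hQ hQ_card
      omega

lemma eq_zero_of_coeff_X_sub_C_pow_mul_eq_zero {c : R} (hc : c ≠ 0) {a b N : ℕ} {f : R[X]}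
    (hf : f ∈ Polynomial.degreeLT R N)
    (hcoeff : ∀ r < N,
      ((Polynomial.X - Polynomial.C c) ^ (a + b) * f).coeff (a + r) = 0) :
    f = 0 := by
  by_contra hf0
  set P := (Polynomial.X - Polynomial.C c) ^ (a + b) * f
  have hP : P ≠ 0 := mul_ne_zero (pow_ne_zero _ (Polynomial.X_sub_C_ne_zero c)) hf0
  have hP_degree : P.natDegree < a + b + N := by
    rw [Polynomial.natDegree_mul (pow_ne_zero _ (Polynomial.X_sub_C_ne_zero c)) hf0,
      Polynomial.natDegree_pow, Polynomial.natDegree_X_sub_C, mul_one]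
    have := (Polynomial.natDegree_lt_iff_degree_lt hf0).2 (Polynomial.mem_degreeLT.1 hf)
    omega
  have hP_support : P.support ⊆ Finset.range a ∪ Finset.Ico (a + N) (a + N + b) := by
    intro u hu
    have hu_lt := (Polynomial.le_natDegree_of_mem_supp u hu).trans_lt hP_degree
    simp only [Finset.mem_union, Finset.mem_range, Finset.mem_Ico]
    by_contra! h
    have hu_window := hcoeff (u - a) (by omega)
    rw [Nat.add_sub_cancel' (by omega)] at hu_window
    exact Polynomial.mem_support_iff.1 hu hu_window
  have hP_card : P.support.card ≤ a + b :=
    calc P.support.card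
        ≤ (Finset.range a ∪ Finset.Ico (a + N) (a + N + b)).card := Finset.card_le_card hP_support
      _ ≤ a + b := (Finset.card_union_le _ _).trans (by simp)
  have hP_order : a + b ≤ P.rootMultiplicity c :=
    (Polynomial.le_rootMultiplicity_iff hP).2 (dvd_mul_right _ _)
  exact (hP_order.trans_lt (rootMultiplicity_lt_card_support hP hc)).not_ge hP_card

lemma exists_coeff_X_sub_C_pow_mul_eq {K : Type*} [Field K] [CharZero K] {c : K} (hc : c ≠ 0)
    (a b N : ℕ) (v : ℕ → K) :
    ∃ f ∈ Polynomial.degreeLT K N, ∀ r < N,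
      ((Polynomial.X - Polynomial.C c) ^ (a + b) * f).coeff (a + r) = v r := by
  let window : Polynomial.degreeLT K N →ₗ[K] (Fin N → K) :=
    LinearMap.pi (fun r => Polynomial.lcoeff K (a + r)) ∘ₗ
      LinearMap.mulLeft K ((Polynomial.X - Polynomial.C c) ^ (a + b)) ∘ₗ
      (Polynomial.degreeLT K N).subtype
  have hinj : Function.Injective window := by
    refine (injective_iff_map_eq_zero window).2 fun f hf => Subtype.ext ?_
    exact eq_zero_of_coeff_X_sub_C_pow_mul_eq_zero hc f.2 fun r hr => congrFun hf ⟨r, hr⟩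
  have : FiniteDimensional K (Polynomial.degreeLT K N) :=
    Module.Finite.equiv (Polynomial.degreeLTEquiv K N).symm
  have hsurj : Function.Surjective window :=
    (LinearMap.injective_iff_surjective_of_finrank_eq_finrank
      (Polynomial.degreeLTEquiv K N).finrank_eq).1 hinj
  obtain ⟨f, hf⟩ := hsurj fun r => v r
  exact ⟨f, f.2, fun r hr => congrFun hf ⟨r, hr⟩⟩

end SparsePolynomial

section TwoVariables

lemma isHomogeneous_X_add_X_pow {σ R : Type*} [CommSemiring R] (i j : σ) (m : ℕ) :
    ((X i + X j : MvPolynomial σ R) ^ m).IsHomogeneous m := by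
  simpa using ((isHomogeneous_X R i).add (isHomogeneous_X R j)).pow m

lemma homogenize_X_add_one_pow {R : Type*} [CommSemiring R] (m : ℕ) :
    ((Polynomial.X + 1 : R[X]) ^ m).homogenize m = (X 0 + X 1) ^ m :=
  Polynomial.homogenize_eq_of_isHomogeneous (isHomogeneous_X_add_X_pow 0 1 m) (by simp)

lemma exists_isHomogeneous_X_zero_pow_mul_X_one_pow_sub {K : Type*} [Field K] [CharZero K]
    (a b p q : ℕ) :
    ∃ F : MvPolynomial (Fin 2) K, F.IsHomogeneous (p + q) ∧
      ∀ t ∈ (X 0 ^ (a + p) * X 1 ^ (b + q) - (X 0 + X 1) ^ (a + b) * F).support,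
        t 0 < a ∨ t 1 < b := by
  obtain ⟨f, hf, hcoeff⟩ := exists_coeff_X_sub_C_pow_mul_eq (neg_ne_zero.2 (one_ne_zero' K))
    a b (p + q + 1) (Pi.single p 1)
  simp only [map_neg, map_one, sub_neg_eq_add] at hcoeff
  have hf_degree : f.natDegree ≤ p + q := by
    rw [Polynomial.degreeLT_succ_eq_degreeLE, Polynomial.mem_degreeLE] at hf
    exact Polynomial.natDegree_le_of_degree_le hf
  set g : K[X] := Polynomial.X ^ (a + p) - (Polynomial.X + 1) ^ (a + b) * f
  have hg : X 0 ^ (a + p) * X 1 ^ (b + q) - (X 0 + X 1) ^ (a + b) * f.homogenize (p + q)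
      = g.homogenize (a + b + (p + q)) := by
    rw [← homogenize_X_add_one_pow, ← Polynomial.homogenize_mul _ _ (by compute_degree) hf_degree,
      Polynomial.homogenize_sub, Polynomial.homogenize_X_pow (by omega),
      show a + b + (p + q) - (a + p) = b + q by omega]
  refine ⟨f.homogenize (p + q), f.isHomogeneous_homogenize, fun t ht => ?_⟩
  rw [hg, mem_support_iff, Polynomial.coeff_homogenize, ne_eq, ite_eq_right_iff, not_forall] at ht
  obtain ⟨ht_degree, ht_coeff⟩ := ht
  by_contra! h
  obtain ⟨r, hr⟩ := Nat.exists_eq_add_of_le h.1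
  apply ht_coeff
  rw [hr, Polynomial.coeff_sub, hcoeff r (by omega), Polynomial.coeff_X_pow]
  simp [Pi.single_apply]

end TwoVariables

section MonomialReduction

variable {σ R K : Type*}

lemma X_pow_mul_X_pow_dvd_monomial_iff [CommSemiring R] [Nontrivial R] {i j : σ} (hij : i ≠ j)
    {a b : ℕ} {s : σ →₀ ℕ} :
    X i ^ a * X j ^ b ∣ monomial s (1 : R) ↔ a ≤ s i ∧ b ≤ s j := by
  classical
  rw [X_pow_eq_monomial, X_pow_eq_monomial, monomial_mul, one_mul, monomial_one_dvd_monomial_one]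
  refine ⟨fun h => ⟨by simpa [hij] using h i, by simpa [hij] using h j⟩, fun h x => ?_⟩
  simp only [Finsupp.add_apply, Finsupp.single_apply]
  grind

lemma dvd_monomial_of_le_degree [CommSemiring R] {I : Ideal (MvPolynomial σ R)}
    {P : MvPolynomial σ R} {d : ℕ}
    (hdvd : ∀ s : σ →₀ ℕ, s.degree = d → monomial s (1 : R) ∉ I → P ∣ monomial s 1)
    {t : σ →₀ ℕ} (ht : d ≤ t.degree) (htI : monomial t (1 : R) ∉ I) : P ∣ monomial t 1 := by
  obtain ⟨s, hst, hs⟩ := t.exists_le_degree_eq d ht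
  have hs_dvd : monomial s (1 : R) ∣ monomial t 1 :=
    monomial_dvd_monomial.2 ⟨.inr hst, one_dvd 1⟩
  exact (hdvd s hs fun hsI => htI (I.mem_of_dvd hs_dvd hsI)).trans hs_dvd

lemma mem_of_forall_monomial_mem [CommSemiring R] {I : Ideal (MvPolynomial σ R)}
    {P : MvPolynomial σ R} (h : ∀ t ∈ P.support, monomial t 1 ∈ I) : P ∈ I := by
  rw [P.as_sum]
  refine I.sum_mem fun t ht => ?_
  simpa [C_mul_monomial] using I.mul_mem_left (C (P.coeff t)) (h t ht)

lemma exists_mem_support_of_mem_support_rename_mul_monomial [CommSemiring R] {τ : Type*}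
    {f : τ → σ} (hf : Function.Injective f) {P : MvPolynomial τ R} {r t : σ →₀ ℕ} {c : R}
    (ht : t ∈ (rename f P * monomial r c).support) :
    ∃ u ∈ P.support, u.mapDomain f + r = t := by
  classical
  obtain ⟨s, hs, q, hq, rfl⟩ := Finset.mem_add.1 (support_mul _ _ ht)
  obtain rfl : q = r := Finset.mem_singleton.1 (support_monomial_subset hq)
  rw [support_rename_of_injective hf, Finset.mem_image] at hs
  obtain ⟨u, hu, rfl⟩ := hs
  exact ⟨u, hu, rfl⟩

lemma exists_isHomogeneous_monomial_sub_X_add_X_pow_mul [Field K] [CharZero K] {i j : σ}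
    (hij : i ≠ j) {a b : ℕ} {s : σ →₀ ℕ} (ha : a ≤ s i) (hb : b ≤ s j) :
    ∃ e, a + b + e = s.degree ∧ ∃ F : MvPolynomial σ K, F.IsHomogeneous e ∧
      ∀ t ∈ (monomial s 1 - (X i + X j) ^ (a + b) * F).support, t i < a ∨ t j < b := by
  obtain ⟨p, hp⟩ := Nat.exists_eq_add_of_le ha
  obtain ⟨q, hq⟩ := Nat.exists_eq_add_of_le hb
  obtain ⟨F, hF, hF_support⟩ := exists_isHomogeneous_X_zero_pow_mul_X_one_pow_sub (K := K) a b p q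
  set rest := (s.erase i).erase j with hrest
  have hs : s = Finsupp.single i (a + p) + Finsupp.single j (b + q) + rest := by
    rw [← hp, ← hq, ← Finsupp.erase_ne (f := s) hij.symm, add_assoc, Finsupp.single_add_erase,
      Finsupp.single_add_erase]
  have hvars : Function.Injective ![i, j] := by
    simp [Function.Injective, Fin.forall_fin_two, hij, hij.symm]
  refine ⟨p + q + rest.degree, ?_, rename ![i, j] F * monomial rest 1,
    hF.rename_isHomogeneous.mul (isHomogeneous_monomial _ rfl), fun t ht => ?_⟩
  · rw [hs]
    simp only [map_add, Finsupp.degree_single]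
    omega
  have hfactor : monomial s 1 - (X i + X j) ^ (a + b) * (rename ![i, j] F * monomial rest 1) =
      rename ![i, j] (X 0 ^ (a + p) * X 1 ^ (b + q) - (X 0 + X 1) ^ (a + b) * F) *
        monomial rest (1 : K) := by
    have hmonomial : monomial s (1 : K) = X i ^ (a + p) * X j ^ (b + q) * monomial rest 1 := by
      rw [X_pow_eq_monomial, X_pow_eq_monomial, monomial_mul, monomial_mul, ← hs]
      simp
    simp only [hmonomial, map_sub, map_mul, map_pow, map_add, rename_X, Matrix.cons_val_zero,
      Matrix.cons_val_one]
    ring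
  rw [hfactor] at ht
  obtain ⟨u, hu, rfl⟩ := exists_mem_support_of_mem_support_rename_mul_monomial hvars ht
  have hu_i : u.mapDomain ![i, j] i = u 0 := Finsupp.mapDomain_apply hvars u 0
  have hu_j : u.mapDomain ![i, j] j = u 1 := Finsupp.mapDomain_apply hvars u 1
  simpa [hu_i, hu_j, hrest, Finsupp.erase_ne hij] using hF_support u hu

lemma exists_isHomogeneous_monomial_sub_mul_mem [Field K] [CharZero K]
    {I : Ideal (MvPolynomial σ K)} {i j : σ} (hij : i ≠ j) {a b d : ℕ}
    (hdvd : ∀ s : σ →₀ ℕ, s.degree = d → monomial s (1 : K) ∉ I →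
      X i ^ a * X j ^ b ∣ monomial s (1 : K))
    {s : σ →₀ ℕ} (hs : d ≤ s.degree) (hsI : monomial s (1 : K) ∉ I) :
    ∃ e, a + b + e = s.degree ∧ ∃ F : MvPolynomial σ K, F.IsHomogeneous e ∧
      monomial s 1 - (X i + X j) ^ (a + b) * F ∈ I := by
  have hexp : ∀ t : σ →₀ ℕ, d ≤ t.degree → monomial t (1 : K) ∉ I → a ≤ t i ∧ b ≤ t j :=
    fun t ht htI => (X_pow_mul_X_pow_dvd_monomial_iff hij).1
      (dvd_monomial_of_le_degree hdvd ht htI)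
  obtain ⟨ha, hb⟩ := hexp s hs hsI
  obtain ⟨e, he, F, hF, hF_support⟩ :=
    exists_isHomogeneous_monomial_sub_X_add_X_pow_mul (K := K) hij ha hb
  refine ⟨e, he, F, hF, mem_of_forall_monomial_mem fun t ht => ?_⟩
  have hhom : (monomial s 1 - (X i + X j) ^ (a + b) * F).IsHomogeneous s.degree :=
    (isHomogeneous_monomial 1 rfl).sub (he ▸ (isHomogeneous_X_add_X_pow i j (a + b)).mul hF)
  have ht_degree : t.degree = s.degree := (hhom.degree_eq_sum_deg_support ht).symm
  by_contra htI
  have := hexp t (ht_degree ▸ hs) htI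
  have := hF_support t ht
  omega

end MonomialReduction

section LowDegree

variable {σ R : Type*} [CommSemiring R]

lemma span_monomial_image_le_pow_idealOfVars {G : Set (σ →₀ ℕ)} {d : ℕ}
    (hG : ∀ s ∈ G, d ≤ s.degree) :
    Ideal.span ((fun s => monomial s (1 : R)) '' G) ≤ idealOfVars σ R ^ d := by
  intro P hP
  refine (mem_pow_idealOfVars_iff d P).2 fun t ht => ?_
  obtain ⟨s, hs, hst⟩ := mem_ideal_span_monomial_image.1 hP t ht
  exact (hG s hs).trans (Finsupp.degree_mono hst)

lemma eq_zero_of_isHomogeneous_of_mem_pow_idealOfVars {P : MvPolynomial σ R} {e d : ℕ}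
    (hP : P.IsHomogeneous e) (hed : e < d) (hmem : P ∈ idealOfVars σ R ^ d) : P = 0 := by
  ext t
  by_cases ht : t.degree = e
  · exact (mem_pow_idealOfVars_iff' d P).1 hmem t (ht ▸ hed)
  · exact hP.coeff_eq_zero ht

lemma X_add_X_ne_zero [Nontrivial R] {i j : σ} (hij : i ≠ j) :
    (X i + X j : MvPolynomial σ R) ≠ 0 := by
  classical
  intro h
  simpa [coeff_X, Finsupp.single_left_inj, hij.symm] using congrArg (coeff (Finsupp.single i 1)) h

end LowDegree

section GradedPiece

variable {K : Type*} [Field K] {n : ℕ} {I : Ideal (MvPolynomial (Fin n) K)}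

lemma mem_gradedPiece_natCast_iff {k : ℕ} {x : MvPolynomial (Fin n) K ⧸ I} :
    x ∈ gradedPiece I k ↔ ∃ F : MvPolynomial (Fin n) K, F.IsHomogeneous k ∧
      Ideal.Quotient.mk I F = x := by
  simp [gradedPiece]

lemma gradedPiece_of_neg {k : ℤ} (hk : k < 0) : gradedPiece I k = ⊥ :=
  if_neg hk.not_ge

lemma gradedPiece_natCast_le {k : ℕ} {N : Submodule K (MvPolynomial (Fin n) K ⧸ I)}
    (hN : ∀ t : Fin n →₀ ℕ, t.degree = k → Ideal.Quotient.mk I (monomial t (1 : K)) ∈ N) :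
    gradedPiece I k ≤ N := by
  intro x hx
  obtain ⟨F, hF, rfl⟩ := mem_gradedPiece_natCast_iff.1 hx
  rw [F.as_sum, map_sum]
  refine N.sum_mem fun t ht => ?_
  have ht_degree : t.degree = k := (hF.degree_eq_sum_deg_support ht).symm
  have hscale : Ideal.Quotient.mk I (monomial t (F.coeff t)) =
      F.coeff t • Ideal.Quotient.mk I (monomial t (1 : K)) := by
    rw [← Ideal.Quotient.mkₐ_eq_mk K, ← map_smul, smul_monomial, smul_eq_mul, mul_one]
  exact hscale ▸ N.smul_mem _ (hN t ht_degree)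

lemma eq_zero_of_mem_gradedPiece_of_mulLeft_eq_zero {d m : ℕ}
    (hI : I ≤ idealOfVars (Fin n) K ^ d) {P : MvPolynomial (Fin n) K} (hP : P.IsHomogeneous m)
    (hP0 : P ≠ 0) {e : ℤ} (he : m + e < d) {x : MvPolynomial (Fin n) K ⧸ I}
    (hx : x ∈ gradedPiece I e) (hPx : LinearMap.mulLeft K (Ideal.Quotient.mk I P) x = 0) :
    x = 0 := by
  rcases lt_or_ge e 0 with he_neg | he_nonneg
  · simpa [gradedPiece_of_neg he_neg] using hx
  lift e to ℕ using he_nonneg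
  obtain ⟨F, hF, rfl⟩ := mem_gradedPiece_natCast_iff.1 hx
  rw [LinearMap.mulLeft_apply, ← map_mul, Ideal.Quotient.eq_zero_iff_mem] at hPx
  have hPF : P * F = 0 :=
    eq_zero_of_isHomogeneous_of_mem_pow_idealOfVars (hP.mul hF) (by omega) (hI hPx)
  rw [(mul_eq_zero.1 hPF).resolve_left hP0, map_zero]

lemma gradedPiece_le_map_mulLeft_X_add_X_pow [CharZero K] {i j : Fin n} (hij : i ≠ j) {a b d : ℕ}
    (hdvd : ∀ s : Fin n →₀ ℕ, s.degree = d → monomial s (1 : K) ∉ I →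
      X i ^ a * X j ^ b ∣ monomial s (1 : K))
    {k : ℤ} (hk : d ≤ k) :
    gradedPiece I k ≤ (gradedPiece I (k - (a + b))).map
      (LinearMap.mulLeft K (Ideal.Quotient.mk I ((X i + X j) ^ (a + b)))) := by
  lift k to ℕ using by omega
  refine gradedPiece_natCast_le fun t ht => ?_
  by_cases htI : monomial t (1 : K) ∈ I
  · rw [Ideal.Quotient.eq_zero_iff_mem.2 htI]
    exact Submodule.zero_mem _
  obtain ⟨e, he, F, hF, hF_mem⟩ :=
    exists_isHomogeneous_monomial_sub_mul_mem hij hdvd (by omega) htI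
  refine ⟨Ideal.Quotient.mk I F, ?_, ?_⟩
  · rw [show (k : ℤ) - (a + b) = e by omega]
    exact mem_gradedPiece_natCast_iff.2 ⟨F, hF, rfl⟩
  · rw [LinearMap.mulLeft_apply, ← map_mul]
    exact (Ideal.Quotient.eq.2 hF_mem).symm

end GradedPiece

theorem mul_by_power_of_xi_plus_xj_has_maximal_rank_general
    {K : Type*} [Field K] [CharZero K] {n d : ℕ} {I : Ideal (MvPolynomial (Fin n) K)}
    (hI : I ≤ idealOfVars (Fin n) K ^ d) {i j : Fin n} (hij : i ≠ j) {a b : ℕ}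
    (hdvd : ∀ s : Fin n →₀ ℕ, s.degree = d → monomial s (1 : K) ∉ I →
      X i ^ a * X j ^ b ∣ monomial s (1 : K)) (k : ℤ) :
    MaxRankOn (LinearMap.mulLeft K (Ideal.Quotient.mk I ((X i + X j) ^ (a + b))))
      (gradedPiece I (k - (a + b))) (gradedPiece I k) := by
  rcases lt_or_ge k d with hk | hk
  · exact .inl fun x hx => eq_zero_of_mem_gradedPiece_of_mulLeft_eq_zero hI
      (isHomogeneous_X_add_X_pow i j (a + b)) (pow_ne_zero _ (X_add_X_ne_zero hij)) (by omega) hx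
  · exact .inr (gradedPiece_le_map_mulLeft_X_add_X_pow hij hdvd hk)

/-- Let `I ⊆ K[x_1,…,x_n]` be an artinian monomial ideal generated in the
single degree `d` (`K` of characteristic zero). If there are `i < j` and `a, b ≥ 0` such that
every degree-`d` monomial not in `I` is divisible by `x_i^a x_j^b`, then
`×(x_i+x_j)^{a+b} : (S/I)_{k-a-b} → (S/I)_k` has maximal rank for every integer `k`. -/
theorem mul_by_power_of_xi_plus_xj_has_maximal_rank
    (K : Type*) [Field K] [CharZero K] (n d : ℕ)
    (I : Ideal (MvPolynomial (Fin n) K))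
    (hart : Module.Finite K (MvPolynomial (Fin n) K ⧸ I))
    (hmon : ∃ G : Set (Fin n →₀ ℕ), (∀ s ∈ G, (s.sum fun _ v => v) = d) ∧
      I = Ideal.span ((fun s => monomial s (1 : K)) '' G))
    (i j : Fin n) (hij : i < j) (a b : ℕ)
    (hdvd : ∀ s : Fin n →₀ ℕ, (s.sum fun _ v => v) = d → monomial s (1 : K) ∉ I →
      (X i ^ a * X j ^ b : MvPolynomial (Fin n) K) ∣ monomial s 1) :
    ∀ k : ℤ,
      MaxRankOn (LinearMap.mulLeft K (Ideal.Quotient.mk I ((X i + X j) ^ (a + b))))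
        (gradedPiece I (k - (a + b))) (gradedPiece I k) := by
  obtain ⟨G, hG, rfl⟩ := hmon
  exact mul_by_power_of_xi_plus_xj_has_maximal_rank_general
    (span_monomial_image_le_pow_idealOfVars fun s hs => (hG s hs).ge) hij.ne hdvd
end

section
/- Let K be a field of characteristic zero and let I ⊂ S = K[x_1,…,x_n] be an artinian monomial ideal generated in a single degree d. If the Hilbert function satisfies H_{S/I}(d) ≤ d, then S/I has the weak Lefschetz property. Equivalently (contrapositive form): if the multiplication map ×ℓ : (S/I)_{d−1} → (S/I)_d fails to be surjective for every linear form ℓ, then H_{S/I}(d) ≥ d + 1. -/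
open MvPolynomial

/-!
Take `ℓ = ∑ i, X i`. In degrees below `d` the ideal `I` is zero, so injectivity holds because the
polynomial ring is a domain. In degrees at least `d`, surjectivity holds as soon as
`J = I + (ℓ)` contains every monomial of degree `d`. Suppose it does not. The classes `c m` of the
monomials modulo `J` satisfy `∑ i, c (m + eᵢ) = 0`. Starting from a monomial of degree `d` outside
`J` and divisible by `X i`, this relation trades the factors `X i` one by one for other variables,
so some monomial of degree `d` outside `J` is not divisible by `X i`; those divisible by `X i`
number at least `d`, by induction on the degree applied to `m ↦ c (m + eᵢ)`. Hence at least `d + 1`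
monomials of degree `d` lie outside `J`, and so outside `I`, contradicting the bound on the Hilbert
function.
-/

section Homogeneous

attribute [local instance] MvPolynomial.gradedAlgebra

variable {σ R : Type*} [CommSemiring R]

lemma eq_zero_of_isHomogeneous_of_isEmpty [IsEmpty σ] {p : MvPolynomial σ R} {k : ℕ}
    (hp : p.IsHomogeneous k) (hk : k ≠ 0) : p = 0 := by
  by_contra hp0
  exact hk (hp.inj_right (isHomogeneous_of_isEmpty σ R p) hp0)

lemma homogeneousComponent_add_mul {ℓ : MvPolynomial σ R} {e : ℕ} (hℓ : ℓ.IsHomogeneous e)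
    (p : MvPolynomial σ R) (k : ℕ) :
    homogeneousComponent (e + k) (ℓ * p) = ℓ * homogeneousComponent k p := by
  simp_rw [← decomposition.decompose'_apply]
  exact DirectSum.coe_decompose_mul_add_of_left_mem (homogeneousSubmodule σ R) hℓ

lemma exists_isHomogeneous_sub_mul_mem {R : Type*} [CommRing R] {I : Ideal (MvPolynomial σ R)}
    (hI : I.IsHomogeneous (homogeneousSubmodule σ R)) {ℓ : MvPolynomial σ R} {e : ℕ}
    (hℓ : ℓ.IsHomogeneous e) {p : MvPolynomial σ R} {k : ℕ} (hp : p.IsHomogeneous (e + k))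
    (hpI : p ∈ I ⊔ Ideal.span {ℓ}) : ∃ q, q.IsHomogeneous k ∧ p - ℓ * q ∈ I := by
  obtain ⟨a, ha, b, rfl⟩ : ∃ a ∈ I, ∃ b, p = a + ℓ * b := by
    obtain ⟨a, ha, _, hb, rfl⟩ := Submodule.mem_sup.1 hpI
    obtain ⟨b, rfl⟩ := Ideal.mem_span_singleton.1 hb
    exact ⟨a, ha, b, rfl⟩
  refine ⟨homogeneousComponent k b, homogeneousComponent_isHomogeneous k b, ?_⟩
  rw [← homogeneousComponent_add_mul hℓ, ← homogeneousComponent_eq_self hp, map_add,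
    add_sub_cancel_right]
  exact homogeneousComponent_mem_of_mem hI ha _

end Homogeneous

section SumAddSingle

lemma exists_eq_add_single_of_apply_ne_zero {σ : Type*} {m : σ →₀ ℕ} {i : σ} (hi : m i ≠ 0) :
    ∃ r, m = r + Finsupp.single i 1 :=
  ⟨m - Finsupp.single i 1, (tsub_add_cancel_of_le <|
    Finsupp.single_le_iff.2 (Nat.one_le_iff_ne_zero.2 hi)).symm⟩

variable {σ M : Type*} [Fintype σ] [AddCommMonoid M] {c : (σ →₀ ℕ) → M}

lemma exists_ne_zero_and_apply_eq_zero_of_sum_add_single_eq_zero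
    (hc : ∀ m, ∑ i, c (m + Finsupp.single i 1) = 0) (i : σ) {m : σ →₀ ℕ} (hm : c m ≠ 0) :
    ∃ q, q.degree = m.degree ∧ c q ≠ 0 ∧ q i = 0 := by
  induction hk : m i generalizing m with
  | zero => exact ⟨m, rfl, hm, hk⟩
  | succ k ih =>
    obtain ⟨r, rfl⟩ := exists_eq_add_single_of_apply_ne_zero (m := m) (i := i) (by omega)
    obtain ⟨j, hji, hj⟩ : ∃ j ≠ i, c (r + Finsupp.single j 1) ≠ 0 := by
      by_contra! h
      exact hm ((Fintype.sum_eq_single i h).symm.trans (hc r))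
    obtain ⟨q, hdeg, hq, hqi⟩ := ih hj (by simpa [hji] using hk)
    exact ⟨q, by simpa using hdeg, hq, hqi⟩

lemma degree_add_one_le_encard_of_sum_add_single_eq_zero
    (hc : ∀ m, ∑ i, c (m + Finsupp.single i 1) = 0) {m : σ →₀ ℕ} (hm : c m ≠ 0) :
    (m.degree + 1 : ℕ∞) ≤ {s | s.degree = m.degree ∧ c s ≠ 0}.encard := by
  induction hd : m.degree generalizing c m with
  | zero =>
    have : {s | s.degree = 0 ∧ c s ≠ 0}.Nonempty := ⟨m, hd, hm⟩
    simpa using this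
  | succ d ih =>
    obtain ⟨i, hi⟩ : ∃ i, m i ≠ 0 := Finsupp.ne_iff.1 (show m ≠ 0 by rintro rfl; simp at hd)
    obtain ⟨r, rfl⟩ := exists_eq_add_single_of_apply_ne_zero hi
    obtain ⟨q, hqdeg, hq, hqi⟩ :=
      exists_ne_zero_and_apply_eq_zero_of_sum_add_single_eq_zero hc i hm
    let shift : (σ →₀ ℕ) → (σ →₀ ℕ) := (· + Finsupp.single i 1)
    let T : Set (σ →₀ ℕ) := {s | s.degree = d ∧ c (shift s) ≠ 0}
    have hT : (d + 1 : ℕ∞) ≤ T.encard :=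
      ih (c := c ∘ shift) (fun m ↦ by simpa [shift, add_right_comm] using hc (shift m)) hm
        (by simpa using hd)
    have hqT : q ∉ shift '' T := by
      rintro ⟨s, -, rfl⟩
      simp [shift] at hqi
    have hsub : insert q (shift '' T) ⊆ {s | s.degree = d + 1 ∧ c s ≠ 0} := by
      rintro _ (rfl | ⟨s, hs, rfl⟩)
      · exact ⟨hqdeg.trans hd, hq⟩
      · exact ⟨by simp [shift, hs.1], hs.2⟩
    calc ((d + 1 : ℕ) + 1 : ℕ∞) ≤ T.encard + 1 := by push_cast; gcongr
      _ = (insert q (shift '' T)).encard := by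
        rw [Set.encard_insert_of_notMem hqT, (add_left_injective _).encard_image]
      _ ≤ _ := Set.encard_le_encard hsub

end SumAddSingle

section StandardExponents

variable {σ R : Type*} [CommSemiring R]

/-- The exponents of the standard monomials of degree `d` of an ideal `I`, that is, of the
monomials of degree `d` outside `I`. For a monomial ideal over a field they are counted by the
Hilbert function of the quotient. -/
def standardExponents (I : Ideal (MvPolynomial σ R)) (d : ℕ) : Set (σ →₀ ℕ) :=
  {s | s.degree = d ∧ monomial s 1 ∉ I}

lemma standardExponents_subset_of_le {I J : Ideal (MvPolynomial σ R)} (hIJ : I ≤ J) (d : ℕ) :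
    standardExponents J d ⊆ standardExponents I d :=
  fun _ hs ↦ ⟨hs.1, fun h ↦ hs.2 (hIJ h)⟩

lemma add_one_le_encard_standardExponents {R : Type*} [CommRing R] [Fintype σ]
    {J : Ideal (MvPolynomial σ R)} (hJ : ∑ i, X i ∈ J) {d : ℕ}
    (hne : (standardExponents J d).Nonempty) :
    (d + 1 : ℕ∞) ≤ (standardExponents J d).encard := by
  obtain ⟨m, rfl, hm⟩ := hne
  let c : (σ →₀ ℕ) → MvPolynomial σ R ⧸ J := fun s ↦ Ideal.Quotient.mk J (monomial s 1)
  have hc (s : σ →₀ ℕ) : ∑ i, c (s + Finsupp.single i 1) = 0 := by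
    have : ∑ i, monomial (s + Finsupp.single i 1) (1 : R) = monomial s 1 * ∑ i, X i := by
      simp [Finset.mul_sum, X, monomial_mul]
    rw [← map_sum, this, Ideal.Quotient.eq_zero_iff_mem]
    exact J.mul_mem_left _ hJ
  have hc_ne (s : σ →₀ ℕ) : c s ≠ 0 ↔ monomial s 1 ∉ J := Ideal.Quotient.eq_zero_iff_mem.not
  simpa only [standardExponents, hc_ne] using
    degree_add_one_le_encard_of_sum_add_single_eq_zero hc ((hc_ne m).2 hm)

lemma idealOfVars_pow_le_of_standardExponents_eq_empty {I : Ideal (MvPolynomial σ R)} {d : ℕ}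
    (hI : standardExponents I d = ∅) : idealOfVars σ R ^ d ≤ I := by
  rw [pow_idealOfVars_eq_span, Ideal.span_le]
  rintro _ ⟨s, hs, rfl⟩
  by_contra hsI
  exact Set.eq_empty_iff_forall_notMem.1 hI s ⟨hs, hsI⟩

lemma mem_idealOfVars_pow_of_isHomogeneous {p : MvPolynomial σ R} {d k : ℕ}
    (hp : p.IsHomogeneous k) (hdk : d ≤ k) : p ∈ idealOfVars σ R ^ d :=
  (mem_pow_idealOfVars_iff d p).2 fun _ hs ↦ hdk.trans_eq (hp.degree_eq_sum_deg_support hs)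

end StandardExponents

section MonomialIdeal

attribute [local instance] MvPolynomial.gradedAlgebra

variable {σ R : Type*} [CommSemiring R]

variable (R) in
/-- The ideal generated by the monomials with exponents in `G`. -/
noncomputable abbrev monomialIdeal (G : Set (σ →₀ ℕ)) : Ideal (MvPolynomial σ R) :=
  Ideal.span ((fun s ↦ monomial s (1 : R)) '' G)

lemma isHomogeneous_monomialIdeal (G : Set (σ →₀ ℕ)) :
    (monomialIdeal R G).IsHomogeneous (homogeneousSubmodule σ R) := by
  refine Ideal.homogeneous_span _ _ ?_
  rintro _ ⟨s, -, rfl⟩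
  exact ⟨s.degree, isHomogeneous_monomial 1 rfl⟩

lemma monomial_one_mem_monomialIdeal_of_mem_support {G : Set (σ →₀ ℕ)} {p : MvPolynomial σ R}
    (hp : p ∈ monomialIdeal R G) {s : σ →₀ ℕ} (hs : s ∈ p.support) :
    monomial s 1 ∈ monomialIdeal R G := by
  rw [mem_ideal_span_monomial_image] at hp ⊢
  intro t ht
  rw [Finset.mem_singleton.1 (support_monomial_subset ht)]
  exact hp s hs

lemma linearIndepOn_mk_monomial_one (R : Type*) [CommRing R] (G : Set (σ →₀ ℕ)) :
    LinearIndepOn R (fun s ↦ Ideal.Quotient.mkₐ R (monomialIdeal R G) (monomial s 1))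
      {s | monomial s 1 ∉ monomialIdeal R G} := by
  set S : Set (σ →₀ ℕ) := {s | monomial s 1 ∉ monomialIdeal R G}
  refine LinearIndependent.map (f := (Ideal.Quotient.mkₐ R (monomialIdeal R G)).toLinearMap)
    ((basisMonomials σ R).linearIndependent.linearIndepOn (s := S)) ?_
  rw [Submodule.disjoint_def]
  intro p hp hpI
  have hsupp : p ∈ restrictSupport R S := by
    rw [restrictSupport_eq_span, Set.image_eq_range]
    simpa using hp
  replace hpI : p ∈ monomialIdeal R G := Ideal.Quotient.eq_zero_iff_mem.1 hpI
  rw [← support_eq_empty, Finset.eq_empty_iff_forall_notMem]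
  exact fun s hs ↦ hsupp hs (monomial_one_mem_monomialIdeal_of_mem_support hpI hs)

lemma eq_zero_of_isHomogeneous_of_mem_monomialIdeal {G : Set (σ →₀ ℕ)} {d k : ℕ}
    (hG : ∀ s ∈ G, d ≤ s.degree) (hk : k < d) {p : MvPolynomial σ R} (hp : p.IsHomogeneous k)
    (hpG : p ∈ monomialIdeal R G) : p = 0 := by
  by_contra hne
  obtain ⟨s, hs⟩ := support_nonempty.2 hne
  obtain ⟨g, hg, hgs⟩ := mem_ideal_span_monomial_image.1 hpG s hs
  have hsk : s.degree = k := (hp.degree_eq_sum_deg_support hs).symm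
  have := hG g hg
  have := Finsupp.degree_mono hgs
  omega

end MonomialIdeal

section GradedPiece

attribute [local instance] MvPolynomial.gradedAlgebra

variable {K : Type*} [Field K] {n : ℕ} {I : Ideal (MvPolynomial (Fin n) K)}

lemma gradedPiece_natCast (I : Ideal (MvPolynomial (Fin n) K)) (j : ℕ) :
    gradedPiece I j =
      (homogeneousSubmodule (Fin n) K j).map (Ideal.Quotient.mkₐ K I).toLinearMap := by
  simp [gradedPiece]

lemma mem_gradedPiece_natCast {j : ℕ} {x : MvPolynomial (Fin n) K ⧸ I} :
    x ∈ gradedPiece I j ↔ ∃ p : MvPolynomial (Fin n) K, p.IsHomogeneous j ∧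
      Ideal.Quotient.mk I p = x := by
  rw [gradedPiece_natCast]
  rfl

lemma encard_standardExponents_le_finrank_gradedPiece (G : Set (Fin n →₀ ℕ)) (d : ℕ) :
    (standardExponents (monomialIdeal K G) d).encard ≤
      Module.finrank K (gradedPiece (monomialIdeal K G) d) := by
  have hfin : Module.Finite K (gradedPiece (monomialIdeal K G) d) := by
    rw [gradedPiece_natCast, Module.Finite.iff_fg]
    exact (homogeneousSubmodule_fg (Fin n) K d).map _
  have hindep := (linearIndepOn_mk_monomial_one K G).mono
    (fun s hs ↦ hs.2 : standardExponents (monomialIdeal K G) d ⊆ _)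
  rw [← toENat_rank_span_set hindep, ← Cardinal.toENat_nat, Module.finrank_eq_rank]
  refine Cardinal.toENat.monotone' (Submodule.rank_mono ?_)
  rw [Submodule.span_le]
  rintro _ ⟨s, hs, rfl⟩
  exact mem_gradedPiece_natCast.2 ⟨_, isHomogeneous_monomial 1 hs.1, rfl⟩

lemma gradedPiece_add_one_le_map_mulLeft (hI : I.IsHomogeneous (homogeneousSubmodule (Fin n) K))
    {ℓ : MvPolynomial (Fin n) K} (hℓ : ℓ.IsHomogeneous 1) {j : ℕ}
    (hmem : ∀ p : MvPolynomial (Fin n) K, p.IsHomogeneous (j + 1) → p ∈ I ⊔ Ideal.span {ℓ}) :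
    gradedPiece I (j + 1) ≤
      (gradedPiece I j).map (LinearMap.mulLeft K (Ideal.Quotient.mk I ℓ)) := by
  intro x hx
  obtain ⟨p, hp, rfl⟩ := mem_gradedPiece_natCast.1 (by exact_mod_cast hx)
  obtain ⟨q, hq, hpq⟩ :=
    exists_isHomogeneous_sub_mul_mem hI hℓ (by rwa [add_comm]) (hmem p hp)
  refine ⟨_, mem_gradedPiece_natCast.2 ⟨q, hq, rfl⟩, ?_⟩
  rw [LinearMap.mulLeft_apply, ← map_mul]
  exact (Ideal.Quotient.eq.2 hpq).symm

lemma eq_zero_of_mem_gradedPiece_of_mulLeft_eq_zero_s11 {ℓ : MvPolynomial (Fin n) K}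
    (hℓ : ℓ.IsHomogeneous 1) (hℓ0 : ℓ ≠ 0) {j : ℕ}
    (hI : ∀ p : MvPolynomial (Fin n) K, p.IsHomogeneous (j + 1) → p ∈ I → p = 0)
    {x : MvPolynomial (Fin n) K ⧸ I} (hx : x ∈ gradedPiece I j)
    (hℓx : LinearMap.mulLeft K (Ideal.Quotient.mk I ℓ) x = 0) : x = 0 := by
  obtain ⟨p, hp, rfl⟩ := mem_gradedPiece_natCast.1 hx
  rw [LinearMap.mulLeft_apply, ← map_mul, Ideal.Quotient.eq_zero_iff_mem] at hℓx
  have hℓp : ℓ * p = 0 := hI _ (add_comm 1 j ▸ hℓ.mul hp) hℓx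
  rw [(mul_eq_zero.1 hℓp).resolve_left hℓ0, map_zero]

end GradedPiece

section SumX

lemma isHomogeneous_sum_X (σ R : Type*) [Fintype σ] [CommSemiring R] :
    (∑ i, X i : MvPolynomial σ R).IsHomogeneous 1 :=
  IsHomogeneous.sum _ _ _ fun i _ ↦ isHomogeneous_X _ i

lemma sum_X_ne_zero (σ R : Type*) [Fintype σ] [Nonempty σ] [CommSemiring R] [Nontrivial R] :
    (∑ i, X i : MvPolynomial σ R) ≠ 0 := by
  classical
  obtain ⟨i⟩ := ‹Nonempty σ›
  intro h
  simpa [coeff_sum, coeff_X, Finsupp.single_left_inj] using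
    congrArg (coeff (Finsupp.single i 1)) h

variable {K : Type*} [Field K] {n : ℕ}

lemma standardExponents_sup_span_sum_X_eq_empty {G : Set (Fin n →₀ ℕ)} {d : ℕ}
    (hH : Module.finrank K (gradedPiece (monomialIdeal K G) d) ≤ d) :
    standardExponents (monomialIdeal K G ⊔ Ideal.span {∑ i, X i}) d = ∅ := by
  set J := monomialIdeal K G ⊔ Ideal.span {∑ i, X i}
  by_contra! hne
  have hJ : ∑ i, X i ∈ J := Ideal.mem_sup_right (Ideal.mem_span_singleton_self _)
  have : (d + 1 : ℕ∞) ≤ d := calc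
    (d + 1 : ℕ∞) ≤ (standardExponents J d).encard := add_one_le_encard_standardExponents hJ hne
    _ ≤ (standardExponents (monomialIdeal K G) d).encard :=
      Set.encard_le_encard (standardExponents_subset_of_le le_sup_left d)
    _ ≤ Module.finrank K (gradedPiece (monomialIdeal K G) d) :=
      encard_standardExponents_le_finrank_gradedPiece G d
    _ ≤ d := by exact_mod_cast hH
  exact absurd this (by exact_mod_cast d.not_succ_le_self)

end SumX

theorem WLP_when_hilbert_function_at_d_is_small_general
    {K : Type*} [Field K] {n d : ℕ} {G : Set (Fin n →₀ ℕ)} (hG : ∀ s ∈ G, d ≤ s.degree)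
    (hH : Module.finrank K (gradedPiece (monomialIdeal K G) d) ≤ d) (j : ℤ) :
    MaxRankOn (LinearMap.mulLeft K (Ideal.Quotient.mk (monomialIdeal K G) (∑ i, X i)))
      (gradedPiece (monomialIdeal K G) j) (gradedPiece (monomialIdeal K G) (j + 1)) := by
  have hℓ := isHomogeneous_sum_X (Fin n) K
  rcases lt_or_ge j 0 with hj | hj
  · exact .inl fun x hx _ ↦ by simpa [gradedPiece, hj.not_ge] using hx
  lift j to ℕ using hj
  rcases isEmpty_or_nonempty (Fin n) with _ | _
  · refine .inr (gradedPiece_add_one_le_map_mulLeft (isHomogeneous_monomialIdeal G) hℓ ?_)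
    exact fun p hp ↦ eq_zero_of_isHomogeneous_of_isEmpty hp j.succ_ne_zero ▸ zero_mem _
  rcases lt_or_ge (j + 1) d with hjd | hdj
  · exact .inl fun x ↦ eq_zero_of_mem_gradedPiece_of_mulLeft_eq_zero_s11 hℓ (sum_X_ne_zero _ _)
      fun p ↦ eq_zero_of_isHomogeneous_of_mem_monomialIdeal hG hjd
  · refine .inr (gradedPiece_add_one_le_map_mulLeft (isHomogeneous_monomialIdeal G) hℓ ?_)
    exact fun p hp ↦ idealOfVars_pow_le_of_standardExponents_eq_empty
      (standardExponents_sup_span_sum_X_eq_empty hH) (mem_idealOfVars_pow_of_isHomogeneous hp hdj)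

/-- Let `I ⊆ K[x_1,…,x_n]` be an artinian monomial ideal generated in the
single degree `d` (`K` of characteristic zero). If the Hilbert function satisfies
`H_{S/I}(d) ≤ d`, then `S/I` has the weak Lefschetz property. -/
theorem WLP_when_hilbert_function_at_d_is_small
    (K : Type*) [Field K] [CharZero K] (n d : ℕ)
    (I : Ideal (MvPolynomial (Fin n) K))
    (hart : Module.Finite K (MvPolynomial (Fin n) K ⧸ I))
    (hmon : ∃ G : Set (Fin n →₀ ℕ), (∀ s ∈ G, (s.sum fun _ v => v) = d) ∧
      I = Ideal.span ((fun s => monomial s (1 : K)) '' G))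
    (hH : Module.finrank K ↥(gradedPiece I (d : ℤ)) ≤ d) :
    ∃ ℓ : MvPolynomial (Fin n) K, ℓ.IsHomogeneous 1 ∧
      ∀ j : ℤ, MaxRankOn (LinearMap.mulLeft K (Ideal.Quotient.mk I ℓ))
        (gradedPiece I j) (gradedPiece I (j + 1)) := by
  obtain ⟨G, hG, rfl⟩ := hmon
  exact ⟨∑ i, X i, isHomogeneous_sum_X _ _,
    WLP_when_hilbert_function_at_d_is_small_general (fun s hs ↦ (hG s hs).ge) hH⟩
end
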